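/- For finite subsets I, J, K of ℤ, there exists a surjective degree-zero C-module homomorphism Cx_I ⊕ Cx_J → Cx_K if and only if I ∩ J ⊆ K ⊆ I ∪ J. -/

import Mathlib

open scoped symmDiff

noncomputable section

/-- The ring `C = k[x_n : n ∈ ℤ] / (x_n² + n = x_m² + m)`. -/
abbrev WeylC (k : Type) [Field k] : Type :=
  MvPolynomial ℤ k ⧸ Ideal.span { p : MvPolynomial ℤ k |
    ∃ m n : ℤ, p = MvPolynomial.X n ^ 2 + (n : MvPolynomial ℤ k)
      - MvPolynomial.X m ^ 2 - (m : MvPolynomial ℤ k) }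

variable (k : Type) [Field k]

/-- The generator `x_n` of `C`. -/
def xC (n : ℤ) : WeylC k := Ideal.Quotient.mk _ (MvPolynomial.X n)

/-- `x_I := ∏_{i ∈ I} x_i` for a finite subset `I ⊆ ℤ` (with `x_∅ = 1`). -/
def xS (I : Finset ℤ) : WeylC k := ∏ i ∈ I, xC k i

/-- The identity component `C_∅ = k[x_0²]`. -/
def Cphi : Subalgebra k (WeylC k) := Algebra.adjoin k {xC k 0 ^ 2}

/-- The homogeneous component `C_I = C_∅ · x_I` of the `ℤ_fin`-grading on `C`. -/
def Cgrade (I : Finset ℤ) : Submodule k (WeylC k) :=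
  (Cphi k).toSubmodule.map (LinearMap.mulRight k (xS k I))

/-- The graded ideal `Cx_I` generated by `x_I`. -/
def Cx (I : Finset ℤ) : Ideal (WeylC k) := Ideal.span {xS k I}

/- HELPERS -/
theorem xC_rel (m n : ℤ) : xC k n ^ 2 = xC k m ^ 2 + ((m - n : ℤ) : WeylC k) := by
  have h : (Ideal.Quotient.mk _ (MvPolynomial.X n ^ 2 + (n : MvPolynomial ℤ k)
      - MvPolynomial.X m ^ 2 - (m : MvPolynomial ℤ k)) : WeylC k) = 0 :=
    Ideal.Quotient.eq_zero_iff_mem.2 (Ideal.subset_span ⟨m, n, rfl⟩)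
  simp only [map_sub, map_add, map_pow, map_intCast] at h
  unfold xC
  push_cast
  linear_combination h

theorem xC_sq_mem (n : ℤ) : xC k n ^ 2 ∈ Cphi k := by
  rw [xC_rel k 0 n]
  exact add_mem (Algebra.subset_adjoin rfl) (intCast_mem _ _)

theorem xS_sq_mem (I : Finset ℤ) : xS k I ^ 2 ∈ Cphi k := by
  unfold xS
  rw [← Finset.prod_pow]
  exact prod_mem fun i _ => xC_sq_mem k i

theorem Cgrade_mul {a u : WeylC k} {L : Finset ℤ} (ha : a ∈ Cphi k) (hu : u ∈ Cgrade k L) :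
    a * u ∈ Cgrade k L := by
  obtain ⟨b, hb, rfl⟩ := hu
  exact ⟨a * b, (Cphi k).mul_mem ha hb, by simp [mul_assoc]⟩

theorem xS_mul_sdiff (I K : Finset ℤ) : xS k (K \ I) * xS k I = xS k (I \ K) * xS k K := by
  unfold xS
  rw [← Finset.prod_union Finset.sdiff_disjoint, ← Finset.prod_union Finset.sdiff_disjoint,
    Finset.sdiff_union_self_eq_union, Finset.sdiff_union_self_eq_union, Finset.union_comm]

theorem xS_self_mem (I : Finset ℤ) : xS k I ∈ Cx k I := Ideal.subset_span rfl

theorem mem_Cx {I : Finset ℤ} {u : WeylC k} : u ∈ Cx k I ↔ ∃ c, c * xS k I = u :=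
  Ideal.mem_span_singleton'

/-- multiplication by `x_{K \ I}²` as a map `C x_I → C x_K` -/
def mulMap (I K : Finset ℤ) : ↥(Cx k I) →ₗ[WeylC k] ↥(Cx k K) :=
  ((LinearMap.mulLeft (WeylC k) (xS k (K \ I) ^ 2)).comp (Cx k I).subtype).codRestrict (Cx k K)
    (by
      rintro ⟨u, hu⟩
      obtain ⟨c, rfl⟩ := (mem_Cx k).1 hu
      refine (mem_Cx k).2 ⟨xS k (K \ I) * c * xS k (I \ K), ?_⟩
      simp only [LinearMap.comp_apply, Submodule.subtype_apply, LinearMap.mulLeft_apply]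
      linear_combination -(xS k (K \ I) * c) * xS_mul_sdiff k I K)

theorem mulMap_coe (I K : Finset ℤ) (u : ↥(Cx k I)) :
    (mulMap k I K u : WeylC k) = xS k (K \ I) ^ 2 * u := rfl

/-- the values of the test homomorphism -/
def vT (s : ℤ → AlgebraicClosure k) (n m : ℤ) : DualNumber (AlgebraicClosure k) :=
  if m = n then DualNumber.eps else TrivSqZeroExt.inl (s m)

theorem exists_phi (n : ℤ) [CharZero k] :
    ∃ φ : WeylC k →ₐ[k] DualNumber (AlgebraicClosure k),
      (φ (xC k n) = DualNumber.eps) ∧ (∀ m, m ≠ n → (φ (xC k m)).fst ≠ 0) ∧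
      (∀ g ∈ Cphi k, ∃ a : k, φ g = algebraMap k _ a) := by
  have hs : ∀ m : ℤ, ∃ s : AlgebraicClosure k, s ^ 2 = ((n - m : ℤ) : AlgebraicClosure k) :=
    fun m => IsAlgClosed.exists_pow_nat_eq _ (by norm_num)
  choose s hs using hs
  have hv : ∀ m, vT k s n m ^ 2 = ((n - m : ℤ) : DualNumber (AlgebraicClosure k)) := by
    intro m
    unfold vT
    split_ifs with h
    · subst h
      simp [sq]
    · exact (TrivSqZeroExt.inl_pow (s m) 2).trans (by rw [hs, TrivSqZeroExt.inl_intCast])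
  let φ : WeylC k →ₐ[k] DualNumber (AlgebraicClosure k) :=
    Ideal.Quotient.liftₐ _ (MvPolynomial.aeval (vT k s n)) (by
      intro a ha
      rw [← RingHom.mem_ker]
      refine (Ideal.span_le.2 ?_) ha
      rintro p ⟨m, l, rfl⟩
      simp only [SetLike.mem_coe, RingHom.mem_ker, map_sub, map_add, map_pow, map_intCast,
        MvPolynomial.aeval_X, hv]
      push_cast
      ring)
  have hφ : ∀ m, φ (xC k m) = vT k s n m := by
    intro m
    change MvPolynomial.aeval (vT k s n) (MvPolynomial.X m) = _
    simp
  refine ⟨φ, ?_, ?_, ?_⟩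
  · rw [hφ]; simp [vT]
  · intro m hm h0
    rw [hφ, vT, if_neg hm, TrivSqZeroExt.fst_inl] at h0
    have := hs m
    rw [h0, zero_pow two_ne_zero] at this
    have h2 : (n - m : ℤ) = 0 := by exact_mod_cast this.symm
    omega
  · intro g hg
    have : Cphi k ≤ (⊥ : Subalgebra k (DualNumber (AlgebraicClosure k))).comap φ := by
      refine Algebra.adjoin_le ?_
      rintro _ rfl
      simp only [SetLike.mem_coe, Subalgebra.mem_comap, map_pow, hφ, hv]
      exact intCast_mem _ _
    obtain ⟨a, ha⟩ := Algebra.mem_bot.1 (this hg)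
    exact ⟨a, ha.symm⟩

section
variable {k}

theorem fst_ne {n : ℤ} {φ : WeylC k →ₐ[k] DualNumber (AlgebraicClosure k)}
    (h1 : ∀ m, m ≠ n → (φ (xC k m)).fst ≠ 0) {I : Finset ℤ} (hI : n ∉ I) :
    (φ (xS k I)).fst ≠ 0 := by
  have : (φ (xS k I)).fst = ∏ i ∈ I, (φ (xC k i)).fst := by
    unfold xS
    rw [map_prod]
    exact map_prod (TrivSqZeroExt.fstHom k (AlgebraicClosure k) (AlgebraicClosure k)) _ _
  rw [this]
  exact Finset.prod_ne_zero_iff.2 fun i hi => h1 i (fun h => hI (h ▸ hi))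

theorem eq_eps_mul {n : ℤ} {φ : WeylC k →ₐ[k] DualNumber (AlgebraicClosure k)}
    (h0 : φ (xC k n) = DualNumber.eps) {I : Finset ℤ} (hI : n ∈ I) :
    φ (xS k I) = DualNumber.eps * φ (xS k (I.erase n)) := by
  rw [← h0, ← map_mul]
  unfold xS
  rw [Finset.mul_prod_erase _ _ hI]

theorem fst_eq {n : ℤ} {φ : WeylC k →ₐ[k] DualNumber (AlgebraicClosure k)}
    (h0 : φ (xC k n) = DualNumber.eps) {I : Finset ℤ} (hI : n ∈ I) :
    (φ (xS k I)).fst = 0 := by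
  rw [eq_eps_mul h0 hI]
  simp

theorem g_zero {n : ℤ} {φ : WeylC k →ₐ[k] DualNumber (AlgebraicClosure k)}
    (h0 : φ (xC k n) = DualNumber.eps) (h1 : ∀ m, m ≠ n → (φ (xC k m)).fst ≠ 0)
    (h2 : ∀ g ∈ Cphi k, ∃ a : k, φ g = algebraMap k _ a)
    {I K : Finset ℤ} (hI : n ∉ I) (hK : n ∈ K) {g : WeylC k} (hg : g ∈ Cphi k)
    (hm : g * xS k I ∈ Cx k K) : φ g = 0 := by
  obtain ⟨c, hc⟩ := (mem_Cx k).1 hm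
  obtain ⟨a, ha⟩ := h2 g hg
  have h := congrArg (fun z => (φ z).fst) hc
  simp only [map_mul, TrivSqZeroExt.fst_mul, fst_eq h0 hK, mul_zero, ha] at h
  have h3 := (mul_eq_zero.1 h.symm).resolve_right (fst_ne h1 hI)
  have h4 : algebraMap k (AlgebraicClosure k) a = 0 := h3
  have h5 : a = 0 := by simpa using h4
  rw [ha, h5, map_zero]
end

theorem coprime_xC [CharZero k] {m n : ℤ} (h : m ≠ n) : IsCoprime (xC k m ^ 2) (xC k n ^ 2) := by
  have hu : ((m - n : ℤ) : k) ≠ 0 := by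
    exact_mod_cast sub_ne_zero.2 h
  have hu' : algebraMap k (WeylC k) ((m - n : ℤ) : k)⁻¹ * ((m - n : ℤ) : WeylC k) = 1 := by
    rw [← map_intCast (algebraMap k (WeylC k)), ← map_mul, inv_mul_cancel₀ hu, map_one]
  refine ⟨-algebraMap k (WeylC k) ((m - n : ℤ) : k)⁻¹, algebraMap k (WeylC k) ((m - n : ℤ) : k)⁻¹, ?_⟩
  rw [xC_rel k m n]
  linear_combination hu'

theorem coprime_xS [CharZero k] {A B : Finset ℤ} (h : Disjoint A B) :
    IsCoprime (xS k A ^ 2) (xS k B ^ 2) := by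
  unfold xS
  rw [← Finset.prod_pow, ← Finset.prod_pow]
  refine IsCoprime.prod_left fun i hi => IsCoprime.prod_right fun j hj => coprime_xC k ?_
  rintro rfl
  exact Finset.disjoint_left.1 h hi hj

variable [CharZero k]

/-- There exists a surjective degree-zero (i.e. degree-preserving)
`C`-module homomorphism `Cx_I ⊕ Cx_J → Cx_K` if and only if `I ∩ J ⊆ K ⊆ I ∪ J`. -/
theorem cx_surjection_iff (I J K : Finset ℤ) :
    (∃ f : (↥(Cx k I) × ↥(Cx k J)) →ₗ[WeylC k] ↥(Cx k K),
      Function.Surjective f ∧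
      ∀ (L : Finset ℤ) (p : ↥(Cx k I) × ↥(Cx k J)),
        (p.1 : WeylC k) ∈ Cgrade k L → (p.2 : WeylC k) ∈ Cgrade k L →
        (f p : WeylC k) ∈ Cgrade k L) ↔
    I ∩ J ⊆ K ∧ K ⊆ I ∪ J := by
  constructor
  · rintro ⟨f, hf, hd⟩
    have hgI : ∃ g ∈ Cphi k, g * xS k I = f (⟨xS k I, xS_self_mem k I⟩, 0) := by
      obtain ⟨g, hg, h⟩ := hd I (⟨xS k I, xS_self_mem k I⟩, 0) ⟨1, (Cphi k).one_mem, by simp⟩ (zero_mem _)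
      exact ⟨g, hg, h⟩
    have hgJ : ∃ g ∈ Cphi k, g * xS k J = f (0, ⟨xS k J, xS_self_mem k J⟩) := by
      obtain ⟨g, hg, h⟩ := hd J (0, ⟨xS k J, xS_self_mem k J⟩) (zero_mem _) ⟨1, (Cphi k).one_mem, by simp⟩
      exact ⟨g, hg, h⟩
    obtain ⟨g, hg, hgI⟩ := hgI
    obtain ⟨h, hh, hhJ⟩ := hgJ
    have hgm : g * xS k I ∈ Cx k K := hgI ▸ Subtype.property _
    have hhm : h * xS k J ∈ Cx k K := hhJ ▸ Subtype.property _
    have key : ∃ c d, xS k K = c * (g * xS k I) + d * (h * xS k J) := by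
      obtain ⟨⟨⟨u, hu⟩, ⟨v, hv⟩⟩, huv⟩ := hf ⟨xS k K, xS_self_mem k K⟩
      obtain ⟨c, rfl⟩ := (mem_Cx k).1 hu
      obtain ⟨d, rfl⟩ := (mem_Cx k).1 hv
      refine ⟨c, d, ?_⟩
      have e : ((⟨c * xS k I, hu⟩, ⟨d * xS k J, hv⟩) : ↥(Cx k I) × ↥(Cx k J)) =
          c • ((⟨xS k I, xS_self_mem k I⟩, 0) : ↥(Cx k I) × ↥(Cx k J)) +
          d • ((0, ⟨xS k J, xS_self_mem k J⟩) : ↥(Cx k I) × ↥(Cx k J)) := by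
        ext <;> simp
      rw [e, map_add, map_smul, map_smul] at huv
      have := congrArg Subtype.val huv
      rw [hgI, hhJ]
      exact this.symm
    obtain ⟨c, d, key⟩ := key
    constructor
    · intro n hn
      by_contra hK
      obtain ⟨hI, hJ⟩ := Finset.mem_inter.1 hn
      obtain ⟨φ, h0, h1, h2⟩ := exists_phi k n
      apply fst_ne h1 hK
      rw [key]
      simp [fst_eq h0 hI, fst_eq h0 hJ]
    · intro n hK
      by_contra hn
      rw [Finset.mem_union, not_or] at hn
      obtain ⟨φ, h0, h1, h2⟩ := exists_phi k n
      have e1 := g_zero h0 h1 h2 hn.1 hK hg hgm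
      have e2 := g_zero h0 h1 h2 hn.2 hK hh hhm
      have e3 : φ (xS k K) = 0 := by
        rw [key]; simp [e1, e2]
      rw [eq_eps_mul h0 hK] at e3
      have e4 := congrArg TrivSqZeroExt.snd e3
      apply fst_ne h1 (Finset.notMem_erase n K)
      simpa using e4
  · rintro ⟨h1, h2⟩
    refine ⟨(mulMap k I K).coprod (mulMap k J K), ?_, ?_⟩
    · have hA : Disjoint ((K \ I) ∪ (I \ K)) ((K \ J) ∪ (J \ K)) := by
        rw [Finset.disjoint_left]
        intro a ha hb
        have h1a := @h1 a
        have h2a := @h2 a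
        simp only [Finset.mem_union, Finset.mem_sdiff, Finset.mem_inter] at *
        tauto
      have hS : ∀ I : Finset ℤ, xS k ((K \ I) ∪ (I \ K)) = xS k (K \ I) * xS k (I \ K) := by
        intro I
        exact Finset.prod_union disjoint_sdiff_sdiff
      obtain ⟨a, b, hab⟩ := coprime_xS k hA
      rw [hS, hS] at hab
      rintro ⟨w, hw⟩
      obtain ⟨c, rfl⟩ := (mem_Cx k).1 hw
      refine ⟨(⟨(c * a * (xS k (K \ I) * xS k (I \ K))) * xS k I, (mem_Cx k).2 ⟨_, rfl⟩⟩,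
        ⟨(c * b * (xS k (K \ J) * xS k (J \ K))) * xS k J, (mem_Cx k).2 ⟨_, rfl⟩⟩), ?_⟩
      apply Subtype.ext
      rw [LinearMap.coprod_apply, Submodule.coe_add, mulMap_coe, mulMap_coe]
      linear_combination (c * a * xS k (K \ I) ^ 2 * xS k (I \ K)) * xS_mul_sdiff k I K +
        (c * b * xS k (K \ J) ^ 2 * xS k (J \ K)) * xS_mul_sdiff k J K + c * xS k K * hab
    · intro L p hp hq
      rw [LinearMap.coprod_apply, Submodule.coe_add, mulMap_coe, mulMap_coe]
      exact add_mem (Cgrade_mul k (xS_sq_mem k _) hp) (Cgrade_mul k (xS_sq_mem k _) hq)
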